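/- Let 𝒮 be the set of biquadratic fields K = ℚ(√a, √b) ⊆ ℂ with a, b odd squarefree integers and [K:ℚ] = 4, and let 𝒮_ℰ ⊆ 𝒮 be the subset of those K whose ring of integers possesses a Euclidean ideal in the sense of Lenstra. For X > 0, let 𝒮_ℰ(X) = #{K ∈ 𝒮_ℰ : |Δ_K| ≤ X} and 𝒮(X) = #{K ∈ 𝒮 : |Δ_K| ≤ X}. Then lim_{X → ∞} 𝒮_ℰ(X)/𝒮(X) = 0. -/

import Mathlib

open IntermediateField NumberField Filter
noncomputable section
open scoped Classical
def biquad (d₁ d₂ : ℤ) : IntermediateField ℚ ℂ :=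
  IntermediateField.adjoin ℚ {x : ℂ | x ^ 2 = (d₁ : ℂ) ∨ x ^ 2 = (d₂ : ℂ)}
def biquadFamily : Set (IntermediateField ℚ ℂ) :=
  {K | ∃ a b : ℤ, Odd a ∧ Odd b ∧ Squarefree a ∧ Squarefree b ∧
    Module.finrank ℚ K = 4 ∧ K = biquad a b}
def absDisc (K : IntermediateField ℚ ℂ) : ℕ :=
  if h : FiniteDimensional ℚ K then
    haveI := h
    haveI : NumberField K := ⟨⟩
    (NumberField.discr K).natAbs
  else 0

/-- Lenstra's notion of a Euclidean ideal of a Dedekind domain `R`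
(with fraction field `F`). -/
def IsEuclideanIdeal (R : Type*) [CommRing R] [IsDomain R] [IsDedekindDomain R]
    (F : Type*) [Field F] [Algebra R F] [IsFractionRing R F] (C : Ideal R) : Prop :=
  C ≠ 0 ∧
  ∃ (W : Type) (rel : W → W → Prop) (_ : IsWellOrder W rel) (Ψ : Ideal R → W),
    ∀ I : Ideal R, I ≠ 0 →
      ∀ x : F,
        x ∈ (I : FractionalIdeal (nonZeroDivisors R) F)⁻¹ *
            (C : FractionalIdeal (nonZeroDivisors R) F) →
        x ∉ (C : FractionalIdeal (nonZeroDivisors R) F) →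
        ∃ y ∈ C, ∃ J : Ideal R,
          (J : FractionalIdeal (nonZeroDivisors R) F) =
            FractionalIdeal.spanSingleton (nonZeroDivisors R) (x - algebraMap R F y) *
              (I : FractionalIdeal (nonZeroDivisors R) F) *
              (C : FractionalIdeal (nonZeroDivisors R) F)⁻¹ ∧
          rel (Ψ J) (Ψ I)

/-- The number field `K ⊆ ℂ` admits a Euclidean ideal in the sense of Lenstra. -/
def HasEuclideanIdeal (K : IntermediateField ℚ ℂ) : Prop :=
  ∃ h : FiniteDimensional ℚ K,
    letI : FiniteDimensional ℚ K := h
    letI : NumberField K := ⟨⟩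
    ∃ C : Ideal (𝓞 K), IsEuclideanIdeal (𝓞 K) K C

def countS (X : ℝ) : ℕ :=
  Nat.card {K : IntermediateField ℚ ℂ // K ∈ biquadFamily ∧ (absDisc K : ℝ) ≤ X}

def countSE (X : ℝ) : ℕ :=
  Nat.card {K : IntermediateField ℚ ℂ // K ∈ biquadFamily ∧ HasEuclideanIdeal K ∧
    (absDisc K : ℝ) ≤ X}

/- A Euclidean ideal forces the class group to be cyclic, hence to have at most two classes of order
dividing two. For a divisor `d` of `a` the ideal `(d, √a)` of `K = ℚ(√a, √b)` has square `(d)`. If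
two such ideals have the same class, then `d e` is a unit times a square, so `d` is determined up to
boundedly many choices by the class of `(d, √a)`, which has order dividing two, together with a unit
modulo squares: `a` has boundedly many divisors, and likewise `b`. As `lcm(a, b)² ∣ Δ_K`, there are
only `O(√X)` such fields with `|Δ_K| ≤ X`.

On the other hand, the fields `ℚ(√p, √b)` with `p` prime and `b` odd, squarefree and prime to `p`
have `|Δ_K| ≤ (16 p b)²`, so each `p` contributes at least a constant times `√X / p` fields. Since
`∑ 1 / p` diverges, the family grows faster than any multiple of `√X`. -/

/- Euclidean ideals and the class group -/

namespace IsEuclideanIdeal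

variable {R F : Type*} [CommRing R] [IsDedekindDomain R] [Field F] [Algebra R F]
  [IsFractionRing R F]

theorem mk0_eq_mul_of_coeIdeal_eq {I J C : Ideal R} {t : F}
    (hI : I ∈ nonZeroDivisors (Ideal R)) (hJ : J ∈ nonZeroDivisors (Ideal R))
    (hC : C ∈ nonZeroDivisors (Ideal R)) (ht : t ≠ 0)
    (h : (J : FractionalIdeal (nonZeroDivisors R) F) =
      FractionalIdeal.spanSingleton (nonZeroDivisors R) t * I *
        (C : FractionalIdeal (nonZeroDivisors R) F)⁻¹) :
    ClassGroup.mk0 ⟨I, hI⟩ = ClassGroup.mk0 ⟨J, hJ⟩ * ClassGroup.mk0 ⟨C, hC⟩ := by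
  have hC0 : (C : FractionalIdeal (nonZeroDivisors R) F) ≠ 0 :=
    FractionalIdeal.coeIdeal_ne_zero.2 (nonZeroDivisors.ne_zero hC)
  rw [← map_mul, ClassGroup.mk0_eq_mk0_iff_exists_fraction_ring F]
  refine ⟨t, ht, ?_⟩
  rw [MulMemClass.mk_mul_mk, FractionalIdeal.coeIdeal_mul, h, inv_mul_cancel_right₀ hC0]

theorem eq_top_of_inv_mul_le {I C : Ideal R} (hI : I ≠ 0) (hC : C ≠ 0)
    (h : (I : FractionalIdeal (nonZeroDivisors R) F)⁻¹ * C ≤ C) : I = ⊤ := by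
  have hI0 : (I : FractionalIdeal (nonZeroDivisors R) F) ≠ 0 :=
    FractionalIdeal.coeIdeal_ne_zero.2 hI
  have hC0 : (C : FractionalIdeal (nonZeroDivisors R) F) ≠ 0 :=
    FractionalIdeal.coeIdeal_ne_zero.2 hC
  have one_le : ((1 : Ideal R) : FractionalIdeal (nonZeroDivisors R) F) ≤ I :=
    calc ((1 : Ideal R) : FractionalIdeal (nonZeroDivisors R) F)
        = (I : FractionalIdeal (nonZeroDivisors R) F)⁻¹ * C *
            ((C : FractionalIdeal (nonZeroDivisors R) F)⁻¹ * I) := by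
          rw [Ideal.one_eq_top, FractionalIdeal.coeIdeal_top]; field_simp
      _ ≤ C * ((C : FractionalIdeal (nonZeroDivisors R) F)⁻¹ * I) := mul_le_mul_left h _
      _ = I := by field_simp
  rw [FractionalIdeal.coeIdeal_le_coeIdeal, Ideal.one_eq_top] at one_le
  exact top_le_iff.1 one_le

/- Well-founded induction on `Ψ I` shows that every class is a power of the class of `C`: the
Euclidean step replaces `I` by some `J` with `[I] = [J][C]`. -/
theorem isCyclic_classGroup {C : Ideal R} (h : IsEuclideanIdeal R F C) :
    IsCyclic (ClassGroup R) := by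
  obtain ⟨hC, W, rel, hwo, Ψ, euclid⟩ := h
  have hC' := mem_nonZeroDivisors_of_ne_zero hC
  have mk0_mem (w : W) : ∀ I : Ideal R, ∀ hI : I ∈ nonZeroDivisors (Ideal R), Ψ I = w →
      ClassGroup.mk0 ⟨I, hI⟩ ∈ Subgroup.zpowers (ClassGroup.mk0 ⟨C, hC'⟩) := by
    induction w using hwo.toIsWellFounded.wf.induction with
    | _ w ih =>
    rintro I hI rfl
    have hI0 := nonZeroDivisors.ne_zero hI
    by_cases hle : (I : FractionalIdeal (nonZeroDivisors R) F)⁻¹ * C ≤ C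
    · have : ClassGroup.mk0 ⟨I, hI⟩ = 1 := by
        rw [ClassGroup.mk0_eq_one_iff, eq_top_of_inv_mul_le hI0 hC hle]
        infer_instance
      exact this ▸ one_mem _
    · obtain ⟨x, hx, hxC⟩ := SetLike.not_le_iff_exists.1 hle
      obtain ⟨y, hy, J, hJ, hlt⟩ := euclid I hI0 x hx hxC
      have ht : x - algebraMap R F y ≠ 0 := fun h0 ↦
        hxC (sub_eq_zero.1 h0 ▸ (FractionalIdeal.mem_coeIdeal _).2 ⟨y, hy, rfl⟩)
      have hJ0 : J ≠ 0 := by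
        refine (FractionalIdeal.coeIdeal_ne_zero (K := F)).1 ?_
        rw [hJ]
        exact mul_ne_zero (mul_ne_zero (FractionalIdeal.spanSingleton_ne_zero_iff.2 ht)
          (FractionalIdeal.coeIdeal_ne_zero.2 hI0))
          (inv_ne_zero (FractionalIdeal.coeIdeal_ne_zero.2 hC))
      have hJ' := mem_nonZeroDivisors_of_ne_zero hJ0
      rw [mk0_eq_mul_of_coeIdeal_eq hI hJ' hC' ht hJ]
      exact mul_mem (ih (Ψ J) hlt J hJ' rfl) (Subgroup.mem_zpowers _)
  refine ⟨ClassGroup.mk0 ⟨C, hC'⟩, fun c ↦ ?_⟩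
  obtain ⟨I, rfl⟩ := ClassGroup.mk0_surjective c
  exact mk0_mem _ I.1 I.2 rfl

end IsEuclideanIdeal

/- Ideals with principal square -/

theorem span_pair_sq {R : Type*} [CommRing R] {d e α : R} (h : IsCoprime d e)
    (hα : α ^ 2 = d * e) : Ideal.span {d, α} ^ 2 = Ideal.span {d} := by
  rw [sq, Ideal.span_pair_mul_span_pair]
  apply le_antisymm
  · simp only [Ideal.span_le, Set.insert_subset_iff, Set.singleton_subset_iff, SetLike.mem_coe,
      Ideal.mem_span_singleton]
    exact ⟨dvd_mul_left _ _, dvd_mul_right _ _, dvd_mul_left _ _, e, by rw [← sq, hα]⟩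
  · obtain ⟨u, v, huv⟩ := h
    have hd : d = u * (d * d) + v * (α * α) := by linear_combination -d * huv - v * hα
    rw [Ideal.span_le, Set.singleton_subset_iff, SetLike.mem_coe]
    nth_rw 5 [hd]
    exact add_mem (Ideal.mul_mem_left _ _ (Ideal.subset_span (by simp)))
      (Ideal.mul_mem_left _ _ (Ideal.subset_span (by simp)))

/-- The quotient `G / G²` of an abelian group by its subgroup of squares. -/
abbrev ModSquares (G : Type*) [CommGroup G] : Type _ :=
  G ⧸ (powMonoidHom 2 : G →* G).range

namespace ModSquares

variable {G : Type*} [CommGroup G]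

theorem exists_mul_eq_sq {g h : G} (hgh : (g : ModSquares G) = h) : ∃ t : G, g * h = t ^ 2 := by
  obtain ⟨t, ht⟩ := QuotientGroup.eq.1 hgh
  refine ⟨g * t, ?_⟩
  rw [powMonoidHom_apply] at ht
  rw [mul_pow, ht, sq, mul_assoc, mul_inv_cancel_left]

variable (G) [Group.FG G]

instance : Group.FG (ModSquares G) := QuotientGroup.fg _

theorem card_dvd_two_pow_rank : Nat.card (ModSquares G) ∣ 2 ^ Group.rank G := by
  have sq_eq_one (g : ModSquares G) : g ^ 2 = 1 := by
    obtain ⟨g, rfl⟩ := QuotientGroup.mk_surjective g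
    exact (QuotientGroup.eq_one_iff _).2 ⟨g, rfl⟩
  exact (card_dvd_exponent_pow_rank' _ sq_eq_one).trans
    (pow_dvd_pow 2 (Group.rank_le_of_surjective _ (QuotientGroup.mk'_surjective _)))

instance : Finite (ModSquares G) :=
  Nat.finite_of_card_ne_zero fun h ↦ by simpa [h] using card_dvd_two_pow_rank G

end ModSquares

section SelmerBound

variable {R ι : Type*} [CommRing R] [IsDedekindDomain R] {T : Finset ι} {x : ι → R}
  {I : ι → Ideal R} {k : ℕ}

theorem exists_associated_sq_mul {a b : R} {I J : Ideal R} (hI : I ^ 2 = Ideal.span {a})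
    (hJ : J ^ 2 = Ideal.span {b}) (hIJ : (I * J).IsPrincipal) :
    ∃ z, Associated (z ^ 2) (a * b) := by
  obtain ⟨z, hz⟩ := hIJ
  refine ⟨z, Ideal.span_singleton_eq_span_singleton.1 ?_⟩
  rw [← Ideal.span_singleton_pow, ← Ideal.span_singleton_mul_span_singleton, ← hI, ← hJ,
    ← mul_pow, hz, Ideal.submodule_span_eq]

theorem card_le_mul_card_modSquares [Finite (ModSquares Rˣ)] (hx : ∀ i ∈ T, x i ≠ 0)
    (hI : ∀ i ∈ T, I i ^ 2 = Ideal.span {x i})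
    (hk : ∀ i ∈ T, {j ∈ T | IsSquare (x i * x j)}.card ≤ k)
    (hprin : ∀ i ∈ T, ∀ j ∈ T, (I i * I j).IsPrincipal) :
    T.card ≤ k * Nat.card (ModSquares Rˣ) := by
  obtain rfl | ⟨m, hm⟩ := T.eq_empty_or_nonempty
  · simp
  have (i) (hi : i ∈ T) : ∃ (z : R) (u : Rˣ), z ^ 2 * u = x i * x m :=
    exists_associated_sq_mul (hI i hi) (hI m hm) (hprin i hi m hm)
  choose! z u hzu using this
  have := Fintype.ofFinite (ModSquares Rˣ)
  rw [Nat.card_eq_fintype_card, ← Finset.card_univ]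
  refine Finset.card_le_mul_card_image_of_maps_to (f := fun i ↦ (u i : ModSquares Rˣ))
    (fun _ _ ↦ Finset.mem_univ _) k fun c _ ↦ ?_
  obtain h | ⟨i, hi⟩ := {i ∈ T | (u i : ModSquares Rˣ) = c}.eq_empty_or_nonempty
  · simp [h]
  rw [Finset.mem_filter] at hi
  refine (Finset.card_le_card fun j hj ↦ ?_).trans (hk i hi.1)
  rw [Finset.mem_filter] at hj ⊢
  obtain ⟨t, ht⟩ := ModSquares.exists_mul_eq_sq (hi.2.trans hj.2.symm)
  have sq_eq : (z i * z j * t) ^ 2 = x m ^ 2 * (x i * x j) := by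
    have ht' : (u i * u j : R) = t ^ 2 := by exact_mod_cast congrArg Units.val ht
    linear_combination (z j) ^ 2 * (u j) * hzu i hi.1 + (x i * x m) * hzu j hj.1
      - (z i) ^ 2 * (z j) ^ 2 * ht'
  obtain ⟨r, hr⟩ := (IsIntegrallyClosed.pow_dvd_pow_iff two_ne_zero).1 (Dvd.intro _ sq_eq.symm)
  refine ⟨hj.1, r, mul_left_cancel₀ (pow_ne_zero 2 (hx m hm)) ?_⟩
  rw [← sq_eq, hr]
  ring

theorem card_le_mul_card_classGroup [Finite (ModSquares Rˣ)] [Finite (ClassGroup R)]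
    (hx : ∀ i ∈ T, x i ≠ 0) (hI : ∀ i ∈ T, I i ^ 2 = Ideal.span {x i})
    (hk : ∀ i ∈ T, {j ∈ T | IsSquare (x i * x j)}.card ≤ k) :
    T.card ≤ k * Nat.card (ModSquares Rˣ) * Nat.card {c : ClassGroup R // c ^ 2 = 1} := by
  have hI0 (i) (hi : i ∈ T) : I i ∈ nonZeroDivisors (Ideal R) := by
    refine mem_nonZeroDivisors_of_ne_zero fun h ↦ hx i hi ?_
    rw [← Ideal.span_singleton_eq_bot, ← hI i hi, h, zero_pow two_ne_zero, Ideal.zero_eq_bot]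
  choose! J hJ using fun i hi ↦
    (⟨⟨I i, hI0 i hi⟩, rfl⟩ : ∃ J : nonZeroDivisors (Ideal R), J.1 = I i)
  have sq_eq_one (i) (hi : i ∈ T) : ClassGroup.mk0 (J i) ^ 2 = 1 := by
    rw [← map_pow, ClassGroup.mk0_eq_one_iff, SubmonoidClass.coe_pow, hJ i hi, hI i hi]
    exact ⟨_, rfl⟩
  have := Fintype.ofFinite (ClassGroup R)
  rw [Nat.subtype_card {c : ClassGroup R | c ^ 2 = 1} (by simp)]
  refine Finset.card_le_mul_card_image_of_maps_to (f := fun i ↦ ClassGroup.mk0 (J i))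
    (fun i hi ↦ by simpa using sq_eq_one i hi) _ fun c hc ↦ ?_
  refine card_le_mul_card_modSquares (fun i hi ↦ hx i (Finset.mem_filter.1 hi).1)
    (fun i hi ↦ hI i (Finset.mem_filter.1 hi).1) (fun i hi ↦ ?_) fun i hi j hj ↦ ?_
  · exact (Finset.card_le_card (Finset.filter_subset_filter _ (Finset.filter_subset _ _))).trans
      (hk i (Finset.mem_filter.1 hi).1)
  · rw [Finset.mem_filter] at hi hj
    rw [← hJ i hi.1, ← hJ j hj.1]
    refine (ClassGroup.mk0_eq_one_iff (J i * J j).2).1 ?_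
    rw [Subtype.coe_eta, map_mul, hi.2, hj.2, ← sq]
    simpa using hc

end SelmerBound

section

variable (K : Type*) [Field K] [NumberField K]

instance : Group.FG (𝓞 K)ˣ :=
  Group.fg_iff_monoid_fg.2 inferInstance

theorem rank_units_le : Group.rank (𝓞 K)ˣ ≤ NumberField.Units.rank K + 1 := by
  obtain ⟨ζ, hζ⟩ := (NumberField.Units.torsion K).isCyclic_iff_exists_zpowers_eq_top.1 inferInstance
  refine (Group.rank_le (S := insert ζ (Finset.univ.image (NumberField.Units.fundSystem K)))
    ?_).trans ((Finset.card_insert_le _ _).trans (Nat.add_le_add_right ?_ 1))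
  · rw [Finset.coe_insert, Finset.coe_image, Finset.coe_univ, Set.image_univ, Set.insert_eq,
      Subgroup.closure_union, ← Subgroup.zpowers_eq_closure, hζ, sup_comm,
      NumberField.Units.closure_fundSystem_sup_torsion_eq_top]
  · simpa using Finset.card_image_le (s := Finset.univ) (f := NumberField.Units.fundSystem K)

theorem units_rank_lt_finrank : NumberField.Units.rank K < Module.finrank ℚ K := by
  rw [NumberField.Units.rank, NumberField.InfinitePlace.card_eq_nrRealPlaces_add_nrComplexPlaces,
    ← NumberField.InfinitePlace.card_add_two_mul_card_eq_rank]
  have := NumberField.InfinitePlace.card_eq_nrRealPlaces_add_nrComplexPlaces K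
  have := Fintype.card_pos (α := NumberField.InfinitePlace K)
  lia

theorem card_modSquares_units_le : Nat.card (ModSquares (𝓞 K)ˣ) ≤ 2 ^ Module.finrank ℚ K :=
  (Nat.le_of_dvd (by positivity) (ModSquares.card_dvd_two_pow_rank _)).trans
    (Nat.pow_le_pow_right two_pos ((rank_units_le K).trans (units_rank_lt_finrank K)))

end

/- Biquadratic extensions -/

section SqrtComb

variable {R A : Type*} [CommRing R] [CommRing A] [Algebra R A]

/-- The combination `x + y α + w β + v α β` of two generators `α`, `β` (usually square roots) with
coefficients in the base ring. -/
def sqrtComb (α β : A) (x y w v : R) : A :=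
  algebraMap R A x + algebraMap R A y * α + algebraMap R A w * β + algebraMap R A v * (α * β)

theorem sqrtComb_eq_sum (α β : A) (x y w v : R) :
    sqrtComb α β x y w v = ∑ i, ![x, y, w, v] i • ![1, α, β, α * β] i := by
  simp [Fin.sum_univ_four, sqrtComb, Algebra.smul_def]

theorem sqrtComb_mul {a b : R} {α β : A} (hα : α ^ 2 = algebraMap R A a)
    (hβ : β ^ 2 = algebraMap R A b) (x y w v x' y' w' v' : R) :
    sqrtComb α β x y w v * sqrtComb α β x' y' w' v' =
      sqrtComb α β (x * x' + a * (y * y') + b * (w * w') + a * b * (v * v'))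
        (x * y' + y * x' + b * (w * v' + v * w')) (x * w' + w * x' + a * (y * v' + v * y'))
        (x * v' + v * x' + y * w' + w * y') := by
  simp only [sqrtComb, map_add, map_mul, ← hα, ← hβ]
  ring

theorem exists_eq_sqrtComb_of_mem_adjoin {a b : R} {α β z : A} (hα : α ^ 2 = algebraMap R A a)
    (hβ : β ^ 2 = algebraMap R A b) (hz : z ∈ Algebra.adjoin R {α, β}) :
    ∃ x y w v : R, z = sqrtComb α β x y w v := by
  induction hz using Algebra.adjoin_induction with
  | mem z hz =>
    obtain rfl | rfl := hz
    · exact ⟨0, 1, 0, 0, by simp [sqrtComb]⟩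
    · exact ⟨0, 0, 1, 0, by simp [sqrtComb]⟩
  | algebraMap r => exact ⟨r, 0, 0, 0, by simp [sqrtComb]⟩
  | add z z' _ _ hz hz' =>
    obtain ⟨⟨x, y, w, v, rfl⟩, x', y', w', v', rfl⟩ := hz, hz'
    exact ⟨x + x', y + y', w + w', v + v', by simp only [sqrtComb, map_add]; ring⟩
  | mul z z' _ _ hz hz' =>
    obtain ⟨⟨x, y, w, v, rfl⟩, x', y', w', v', rfl⟩ := hz, hz'
    exact ⟨_, _, _, _, sqrtComb_mul hα hβ ..⟩

theorem exists_eq_add_mul_of_mem_adjoin {a : R} {α z : A} (hα : α ^ 2 = algebraMap R A a)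
    (hz : z ∈ Algebra.adjoin R {α}) : ∃ x y : R, z = algebraMap R A x + algebraMap R A y * α := by
  obtain ⟨x, y, w, v, rfl⟩ := exists_eq_sqrtComb_of_mem_adjoin hα hα (by simpa using hz)
  refine ⟨x + a * v, y + w, ?_⟩
  simp only [sqrtComb, map_add, map_mul, ← hα]
  ring

end SqrtComb

/-- `K = F(α, β)` is a biquadratic extension of `F`, where `α² = a` and `β² = b`. -/
structure IsBiquadratic {F K : Type*} [Field F] [Field K] [Algebra F K] (a b : F) (α β : K) :
    Prop where
  sq_left : α ^ 2 = algebraMap F K a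
  sq_right : β ^ 2 = algebraMap F K b
  exists_eq_sqrtComb (z : K) : ∃ x y w v : F, z = sqrtComb α β x y w v
  finrank_eq_four : Module.finrank F K = 4

namespace IsBiquadratic

variable {F K : Type*} [Field F] [Field K] [Algebra F K] {a b : F} {α β : K}

theorem symm (h : IsBiquadratic a b α β) : IsBiquadratic b a β α where
  sq_left := h.sq_right
  sq_right := h.sq_left
  exists_eq_sqrtComb z := by
    obtain ⟨x, y, w, v, rfl⟩ := h.exists_eq_sqrtComb z
    exact ⟨x, w, y, v, by simp only [sqrtComb]; ring⟩
  finrank_eq_four := h.finrank_eq_four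

theorem finiteDimensional (h : IsBiquadratic a b α β) : FiniteDimensional F K :=
  .of_finrank_pos (by simp [h.finrank_eq_four])

theorem exists_basis (h : IsBiquadratic a b α β) :
    ∃ e : Module.Basis (Fin 4) F K, ⇑e = ![1, α, β, α * β] := by
  refine ⟨basisOfTopLeSpanOfCardEqFinrank _ (fun z _ ↦ ?_) h.finrank_eq_four.symm,
    coe_basisOfTopLeSpanOfCardEqFinrank ..⟩
  obtain ⟨x, y, w, v, rfl⟩ := h.exists_eq_sqrtComb z
  rw [Submodule.mem_span_range_iff_exists_fun]
  exact ⟨![x, y, w, v], (sqrtComb_eq_sum ..).symm⟩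

theorem sqrtComb_inj (h : IsBiquadratic a b α β) {x y w v x' y' w' v' : F} :
    sqrtComb α β x y w v = sqrtComb α β x' y' w' v' ↔ x = x' ∧ y = y' ∧ w = w' ∧ v = v' := by
  refine ⟨fun heq ↦ ?_, by rintro ⟨rfl, rfl, rfl, rfl⟩; rfl⟩
  obtain ⟨e, he⟩ := h.exists_basis
  have repr (x y w v : F) : e.equivFun (sqrtComb α β x y w v) = ![x, y, w, v] := by
    rw [← LinearEquiv.eq_symm_apply, e.equivFun_symm_apply, he, sqrtComb_eq_sum]
  have := repr x y w v
  rw [heq, repr] at this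
  simpa [eq_comm] using this

theorem exists_algEquiv_neg_left (h : IsBiquadratic a b α β) :
    ∃ σ : K ≃ₐ[F] K, σ α = -α ∧ σ β = β := by
  have := h.finiteDimensional
  obtain ⟨e, he⟩ := h.exists_basis
  let f : K →ₗ[F] K := e.constr F ![1, -α, β, -(α * β)]
  have f_sqrtComb (x y w v : F) : f (sqrtComb α β x y w v) = sqrtComb α β x (-y) w (-v) := by
    rw [sqrtComb_eq_sum, map_sum]
    simp only [map_smul, ← he, f, Module.Basis.constr_basis]
    simp [Fin.sum_univ_four, sqrtComb, Algebra.smul_def]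
  have f_mul (z z' : K) : f (z * z') = f z * f z' := by
    obtain ⟨x, y, w, v, rfl⟩ := h.exists_eq_sqrtComb z
    obtain ⟨x', y', w', v', rfl⟩ := h.exists_eq_sqrtComb z'
    simp only [sqrtComb_mul h.sq_left h.sq_right, f_sqrtComb]
    congr 1 <;> ring
  have f_one : f 1 = 1 := by simpa [sqrtComb] using f_sqrtComb 1 0 0 0
  refine ⟨(Algebra.IsAlgebraic.algEquivEquivAlgHom F K).symm (AlgHom.ofLinearMap f f_one f_mul),
    ?_, ?_⟩
  · simpa [sqrtComb] using f_sqrtComb 0 1 0 0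
  · simpa [sqrtComb] using f_sqrtComb 0 0 1 0

end IsBiquadratic

section

variable {F K : Type*} [Field F] [Field K] [Algebra F K]

theorem trace_eq_zero_of_map_eq_neg [NeZero (2 : F)] (σ : K ≃ₐ[F] K) {z : K} (hz : σ z = -z) :
    Algebra.trace F K z = 0 := by
  have h := Algebra.trace_eq_of_algEquiv σ z
  rw [hz, map_neg, neg_eq_iff_add_eq_zero, ← two_mul] at h
  exact (mul_eq_zero.1 h).resolve_left two_ne_zero

theorem finrank_adjoin_sqrt_eq_two {a : F} {α : K} (hα : α ^ 2 = algebraMap F K a)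
    (ha : ¬ IsSquare a) : Module.finrank F F⟮α⟯ = 2 := by
  have irred : Irreducible (Polynomial.X ^ 2 - Polynomial.C a) :=
    (X_pow_sub_C_irreducible_iff_of_prime Nat.prime_two).2 fun r hr ↦ ha ⟨r, by rw [← hr, sq]⟩
  have monic := Polynomial.monic_X_pow_sub_C a two_ne_zero
  have root : Polynomial.aeval α (Polynomial.X ^ 2 - Polynomial.C a) = 0 := by simp [hα]
  rw [IntermediateField.adjoin.finrank ⟨_, monic, by simpa [Polynomial.aeval_def] using root⟩,
    ← minpoly.eq_of_irreducible_of_monic irred root monic, Polynomial.natDegree_X_pow_sub_C]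

theorem isSquare_or_isSquare_mul_of_sq_mem_adjoin_sqrt [NeZero (2 : F)] {a b : F} {α γ : K}
    (hα : α ^ 2 = algebraMap F K a) (ha : ¬ IsSquare a) (hγ : γ ∈ F⟮α⟯)
    (hb : γ ^ 2 = algebraMap F K b) : IsSquare b ∨ IsSquare (a * b) := by
  have integral : IsIntegral F α := .of_pow two_pos (hα ▸ isIntegral_algebraMap)
  rw [← IntermediateField.mem_toSubalgebra,
    IntermediateField.adjoin_simple_toSubalgebra_of_isAlgebraic integral.isAlgebraic] at hγ
  obtain ⟨x, y, rfl⟩ := exists_eq_add_mul_of_mem_adjoin hα hγ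
  have expand : algebraMap F K (2 * x * y) * α = algebraMap F K (b - x ^ 2 - a * y ^ 2) := by
    simp only [map_sub, map_mul, map_pow, map_ofNat, ← hα, ← hb]
    ring
  have hxy : 2 * x * y = 0 := by
    by_contra hxy
    refine ha ⟨(b - x ^ 2 - a * y ^ 2) / (2 * x * y), (algebraMap F K).injective ?_⟩
    rw [← hα, ← sq, map_pow, map_div₀, ← expand, mul_div_cancel_left₀ _ (by simpa using hxy)]
  have hb' : b = x ^ 2 + a * y ^ 2 := by
    rw [hxy, map_zero, zero_mul, eq_comm, map_eq_zero] at expand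
    linear_combination expand
  obtain rfl | rfl : x = 0 ∨ y = 0 := by simpa [two_ne_zero] using hxy
  · exact .inr ⟨a * y, by rw [hb']; ring⟩
  · exact .inl ⟨x, by rw [hb']; ring⟩

theorem finrank_adjoin_pair_sqrt_eq_four [NeZero (2 : F)] {a b : F} {α β : K}
    (hα : α ^ 2 = algebraMap F K a) (hβ : β ^ 2 = algebraMap F K b) (ha : ¬ IsSquare a)
    (hb : ¬ IsSquare b) (hab : ¬ IsSquare (a * b)) : Module.finrank F F⟮α, β⟯ = 4 := by
  have finrank_top : Module.finrank F⟮α⟯ F⟮α⟯⟮β⟯ = 2 := by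
    refine finrank_adjoin_sqrt_eq_two (a := algebraMap F F⟮α⟯ b) hβ ?_
    rintro ⟨γ, hγ⟩
    refine (isSquare_or_isSquare_mul_of_sq_mem_adjoin_sqrt hα ha γ.2 ?_).elim hb hab
    rw [sq, ← MulMemClass.coe_mul, ← hγ]
    rfl
  have h := Module.finrank_mul_finrank F F⟮α⟯ F⟮α⟯⟮β⟯
  rw [finrank_adjoin_sqrt_eq_two hα ha, finrank_top] at h
  rw [← adjoin_simple_adjoin_simple]
  exact h.symm

end

namespace IsBiquadratic

variable {F K : Type*} [Field F] [Field K] [Algebra F K] {a b : F} {α β : K}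

theorem of_finrank_adjoin_eq_four (hα : α ^ 2 = algebraMap F K a) (hβ : β ^ 2 = algebraMap F K b)
    (h : Module.finrank F F⟮α, β⟯ = 4) :
    IsBiquadratic a b (⟨α, subset_adjoin F _ (by simp)⟩ : F⟮α, β⟯)
      ⟨β, subset_adjoin F _ (by simp)⟩ where
  sq_left := Subtype.ext hα
  sq_right := Subtype.ext hβ
  exists_eq_sqrtComb z := by
    have algebraic : ∀ γ ∈ ({α, β} : Set K), IsAlgebraic F γ := by
      rintro γ (rfl | rfl)
      · exact (IsIntegral.of_pow two_pos (hα ▸ isIntegral_algebraMap)).isAlgebraic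
      · exact (IsIntegral.of_pow two_pos (hβ ▸ isIntegral_algebraMap)).isAlgebraic
    have hz := z.2
    rw [← IntermediateField.mem_toSubalgebra,
      IntermediateField.adjoin_toSubalgebra_of_isAlgebraic algebraic] at hz
    obtain ⟨x, y, w, v, hz⟩ := exists_eq_sqrtComb_of_mem_adjoin hα hβ hz
    exact ⟨x, y, w, v, Subtype.ext hz⟩
  finrank_eq_four := h

variable [NeZero (2 : F)]

theorem exists_eq_mul_sq_of_sq_eq [DecidableEq F] (h : IsBiquadratic a b α β) {d : F} {z : K}
    (hz : z ^ 2 = algebraMap F K d) :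
    ∃ c ∈ ({1, a, b, a * b} : Finset F), ∃ r, d = c * r ^ 2 := by
  obtain ⟨σ, hσα, hσβ⟩ := h.exists_algEquiv_neg_left
  obtain ⟨τ, hτβ, hτα⟩ := h.symm.exists_algEquiv_neg_left
  have map_eq (ρ : K ≃ₐ[F] K) : ρ z = z ∨ ρ z = -z :=
    sq_eq_sq_iff_eq_or_eq_neg.1 (by rw [← map_pow, hz, AlgEquiv.commutes])
  obtain ⟨x, y, w, v, rfl⟩ := h.exists_eq_sqrtComb z
  have hσ : σ (sqrtComb α β x y w v) = sqrtComb α β x (-y) w (-v) := by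
    simp [sqrtComb, hσα, hσβ]
  have hτ : τ (sqrtComb α β x y w v) = sqrtComb α β x y (-w) (-v) := by
    simp [sqrtComb, hτα, hτβ]
  have neg_eq : -sqrtComb α β x y w v = sqrtComb α β (-x) (-y) (-w) (-v) := by
    simp only [sqrtComb, map_neg]; ring
  have eq_zero {t : F} (ht : -t = t) : t = 0 :=
    (mul_eq_zero.1 (by linear_combination -ht : 2 * t = 0)).resolve_left two_ne_zero
  rw [sq, sqrtComb_mul h.sq_left h.sq_right, (by simp [sqrtComb] :
    algebraMap F K d = sqrtComb α β d 0 0 0), h.sqrtComb_inj] at hz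
  have hd := hz.1
  have hσz := map_eq σ
  have hτz := map_eq τ
  rw [hσ, neg_eq, h.sqrtComb_inj, h.sqrtComb_inj] at hσz
  rw [hτ, neg_eq, h.sqrtComb_inj, h.sqrtComb_inj] at hτz
  obtain ⟨-, hy, -, hv⟩ | ⟨hx, -, hw, -⟩ := hσz <;>
    obtain ⟨-, -, hw', hv'⟩ | ⟨hx', hy', -, -⟩ := hτz
  · exact ⟨1, by simp, x, by rw [← hd, eq_zero hy, eq_zero hv, eq_zero hw']; ring⟩
  · exact ⟨b, by simp, w, by rw [← hd, eq_zero hy, eq_zero hv, eq_zero hx'.symm]; ring⟩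
  · exact ⟨a, by simp, y, by rw [← hd, eq_zero hx.symm, eq_zero hw', eq_zero hv']; ring⟩
  · refine ⟨a * b, by simp, v, ?_⟩
    rw [← hd, eq_zero hx.symm, eq_zero hw.symm, eq_zero hy'.symm]
    ring

theorem trace_sqrtComb (h : IsBiquadratic a b α β) (x y w v : F) :
    Algebra.trace F K (sqrtComb α β x y w v) = 4 * x := by
  obtain ⟨σ, hσα, hσβ⟩ := h.exists_algEquiv_neg_left
  obtain ⟨τ, hτβ, -⟩ := h.symm.exists_algEquiv_neg_left
  have hα := trace_eq_zero_of_map_eq_neg σ hσα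
  have hβ := trace_eq_zero_of_map_eq_neg τ hτβ
  have hαβ := trace_eq_zero_of_map_eq_neg σ (z := α * β) (by rw [map_mul, hσα, hσβ, neg_mul])
  simp [sqrtComb, ← Algebra.smul_def, hα, hβ, hαβ, Algebra.trace_algebraMap, h.finrank_eq_four]

theorem discr_eq (h : IsBiquadratic a b α β) :
    Algebra.discr F ![1, α, β, α * β] = 256 * a ^ 2 * b ^ 2 := by
  have coords (i : Fin 4) : ![1, α, β, α * β] i =
      sqrtComb α β (![1, 0, 0, 0] i) (![0, 1, 0, 0] i) (![0, 0, 1, 0] i) (![0, 0, 0, 1] i : F) := by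
    fin_cases i <;> simp [sqrtComb]
  have diagonal : Algebra.traceMatrix F ![1, α, β, α * β] =
      Matrix.diagonal ![4, 4 * a, 4 * b, 4 * (a * b)] := by
    ext i j
    rw [Algebra.traceMatrix_apply, Algebra.traceForm_apply, coords, coords,
      sqrtComb_mul h.sq_left h.sq_right, h.trace_sqrtComb]
    fin_cases i <;> fin_cases j <;> simp
  rw [Algebra.discr_def, diagonal, Matrix.det_diagonal, Fin.prod_univ_four]
  simp only [Matrix.cons_val]
  ring

end IsBiquadratic

/- Discriminants of biquadratic number fields -/

theorem dvd_of_isSquare_mul {M : Type*} [CommMonoidWithZero M] [IsCancelMulZero M]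
    [DecompositionMonoid M] {d e : M} (hd : Squarefree d) (hd0 : d ≠ 0) (h : IsSquare (d * e)) :
    d ∣ e := by
  obtain ⟨r, hr⟩ := h
  obtain ⟨s, rfl⟩ := (hd.dvd_pow_iff_dvd two_ne_zero).1 (Dvd.intro _ (hr.trans (sq r).symm))
  exact ⟨s * s, mul_left_cancel₀ hd0 (by rw [hr, mul_mul_mul_comm, mul_assoc])⟩

theorem eq_of_isSquare_mul {d e : ℕ} (hd : Squarefree d) (he : Squarefree e)
    (h : IsSquare (d * e)) : d = e :=
  dvd_antisymm (dvd_of_isSquare_mul hd hd.ne_zero h)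
    (dvd_of_isSquare_mul he he.ne_zero (mul_comm d e ▸ h))

theorem isInteger_of_squarefree_mul_sq {R F : Type*} [CommRing R] [IsDomain R]
    [UniqueFactorizationMonoid R] [Field F] [Algebra R F] [IsFractionRing R F] {a : R}
    (ha : Squarefree a) {q : F} (h : IsLocalization.IsInteger R (algebraMap R F a * q ^ 2)) :
    IsLocalization.IsInteger R q := by
  obtain ⟨n, hn⟩ := h
  let num := IsFractionRing.num R q
  let den : R := ↑(IsFractionRing.den R q)
  have num_eq : q * algebraMap R F den = algebraMap R F num := by
    conv_lhs => rw [← IsFractionRing.mk'_num_den R q]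
    exact IsLocalization.mk'_spec ..
  have hdvd : den ^ 2 ∣ a * num ^ 2 := by
    refine ⟨n, IsFractionRing.injective R F ?_⟩
    simp only [map_mul, map_pow, ← num_eq, hn]
    ring
  have coprime : IsRelPrime (den ^ 2) (num ^ 2) := (IsFractionRing.num_den_reduced R q).symm.pow
  refine IsFractionRing.isInteger_of_isUnit_den (ha _ ?_)
  rw [← sq]
  exact coprime.dvd_of_dvd_mul_right hdvd

section

variable {K : Type*} [Field K] [NumberField K]

theorem exists_discr_eq_sq_mul_discr {ι : Type*} [Fintype ι] [DecidableEq ι] {f : ι → K}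
    (hf : ∀ i, IsIntegral ℤ (f i)) (hι : Fintype.card ι = Module.finrank ℚ K) :
    ∃ n : ℤ, Algebra.discr ℚ f = n ^ 2 * NumberField.discr K := by
  let e : ι ≃ Module.Free.ChooseBasisIndex ℤ (𝓞 K) := Fintype.equivOfCardEq (by
    rw [hι, ← RingOfIntegers.rank, Module.finrank_eq_card_chooseBasisIndex])
  let B := (integralBasis K).reindex e.symm
  let P : Matrix ι ι ℤ := .of fun i j ↦ (RingOfIntegers.basis K).repr ⟨f i, hf i⟩ (e j)
  have f_eq : f = ((P.map (algebraMap ℤ ℚ)).map (algebraMap ℚ K)).mulVec B := by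
    ext i
    rw [← B.sum_repr (f i)]
    refine Finset.sum_congr rfl fun j _ ↦ ?_
    rw [Module.Basis.repr_reindex_apply, Equiv.symm_symm, Algebra.smul_def]
    exact congrArg (algebraMap ℚ K · * B j) (integralBasis_repr_apply K ⟨f i, hf i⟩ (e j))
  refine ⟨P.det, ?_⟩
  rw [f_eq, Algebra.discr_of_matrix_mulVec, NumberField.coe_discr, Module.Basis.coe_reindex,
    Algebra.discr_reindex, ← RingHom.mapMatrix_apply, ← RingHom.map_det, eq_intCast]

theorem absNorm_span_sq_eq_of_sq_eq {a : ℤ} {γ : 𝓞 K} (hγ : γ ^ 2 = a) :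
    Ideal.absNorm (Ideal.span {γ}) ^ 2 = a.natAbs ^ Module.finrank ℚ K := by
  rw [← map_pow, Ideal.span_singleton_pow, hγ, ← eq_intCast (algebraMap ℤ (𝓞 K)),
    Ideal.absNorm_span_singleton, Algebra.norm_algebraMap, RingOfIntegers.rank, Int.natAbs_pow]

theorem absNorm_span_dvd_discr {γ : 𝓞 K} (hγ : γ ≠ 0)
    (h : ∀ y : 𝓞 K, IsLocalization.IsInteger ℤ (Algebra.trace ℚ K (y / γ))) :
    Ideal.absNorm (Ideal.span {γ}) ∣ (NumberField.discr K).natAbs := by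
  rw [← NumberField.absNorm_differentIdeal K (𝓞 K)]
  apply Ideal.absNorm_dvd_absNorm_of_le
  rw [differentialIdeal_le_iff (K := ℚ) (L := K) (by simpa using hγ)]
  rintro _ ⟨z, hz, rfl⟩
  rw [FractionalIdeal.coeIdeal_span_singleton, FractionalIdeal.spanSingleton_inv] at hz
  obtain ⟨y, rfl⟩ := (FractionalIdeal.mem_spanSingleton _).1 hz
  rw [Algebra.smul_def, ← div_eq_mul_inv]
  exact Submodule.mem_one.2 (h y)

end

namespace IsBiquadratic

variable {K : Type*} [Field K] [NumberField K] {a b : ℤ} {α β : K}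

theorem isIntegral_left (h : IsBiquadratic (a : ℚ) b α β) : IsIntegral ℤ α :=
  .of_pow two_pos (by simpa [h.sq_left] using isIntegral_intCast a)

theorem natAbs_discr_le (h : IsBiquadratic (a : ℚ) b α β) (ha : a ≠ 0) (hb : b ≠ 0) :
    (NumberField.discr K).natAbs ≤ 256 * a.natAbs ^ 2 * b.natAbs ^ 2 := by
  have integral (i) : IsIntegral ℤ (![1, α, β, α * β] i) := by
    have hα := h.isIntegral_left
    have hβ := h.symm.isIntegral_left
    fin_cases i
    exacts [isIntegral_one, hα, hβ, hα.mul hβ]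
  obtain ⟨n, hn⟩ := exists_discr_eq_sq_mul_discr integral h.finrank_eq_four.symm
  have hn' : 256 * a ^ 2 * b ^ 2 = n ^ 2 * NumberField.discr K := by
    rw [h.discr_eq] at hn
    exact_mod_cast hn
  have := Int.natAbs_dvd_natAbs.2 (Dvd.intro_left _ hn'.symm)
  simp only [Int.natAbs_mul, Int.natAbs_pow] at this
  exact Nat.le_of_dvd (by positivity) this

theorem exists_ringOfIntegers_sq_eq (h : IsBiquadratic (a : ℚ) b α β) :
    ∃ γ : 𝓞 K, (γ : K) = α ∧ γ ^ 2 = a := by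
  obtain ⟨γ, rfl⟩ := IsIntegralClosure.isIntegral_iff (A := 𝓞 K).1 h.isIntegral_left
  exact ⟨γ, rfl, RingOfIntegers.ext (by simpa using h.sq_left)⟩

/- With `σ`, `τ` the two sign changes and `t` the trace of `y / α`, the number `t α` is the integral
combination `y + τ y - σ y - σ τ y` of conjugates of `y`, so `a t² = (t α)²` is an integer. -/
theorem isInteger_trace_div_left (h : IsBiquadratic (a : ℚ) b α β) (ha : Squarefree a) (y : 𝓞 K) :
    IsLocalization.IsInteger ℤ (Algebra.trace ℚ K (y / α)) := by
  obtain ⟨σ, hσα, hσβ⟩ := h.exists_algEquiv_neg_left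
  obtain ⟨τ, hτβ, hτα⟩ := h.symm.exists_algEquiv_neg_left
  have hα0 : α ≠ 0 := by
    rintro rfl
    simpa [ha.ne_zero, eq_comm] using h.sq_left
  obtain ⟨x₀, y₀, w₀, v₀, hy⟩ := h.exists_eq_sqrtComb (y : K)
  have div_eq : (y : K) / α = sqrtComb α β y₀ (x₀ / a) v₀ (w₀ / a) := by
    have a_ne_zero' : (a : K) ≠ 0 := Int.cast_ne_zero.2 ha.ne_zero
    have hα := h.sq_left
    simp only [sqrtComb, map_div₀, map_intCast] at hα hy ⊢
    rw [div_eq_iff hα0, hy]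
    field_simp
    linear_combination (-algebraMap ℚ K x₀ - algebraMap ℚ K w₀ * β) * hα
  have conj_eq : (y : K) + τ y - σ y - σ (τ y) = algebraMap ℚ K (4 * y₀) * α := by
    simp only [hy, sqrtComb, map_add, map_mul, AlgEquiv.commutes, hσα, hσβ, hτα, hτβ, map_neg,
      map_ofNat]
    ring
  have integral : IsIntegral ℤ (algebraMap ℚ K (4 * y₀) * α) := by
    have hy := y.isIntegral_coe
    rw [← conj_eq]
    exact ((hy.add (hy.map τ)).sub (hy.map σ)).sub ((hy.map τ).map σ)
  refine isInteger_of_squarefree_mul_sq ha (IsIntegrallyClosed.isIntegral_iff.1 ?_)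
  rw [div_eq, h.trace_sqrtComb]
  have := integral.pow 2
  rw [mul_pow, h.sq_left, ← map_pow, ← map_mul,
    isIntegral_algebraMap_iff (algebraMap ℚ K).injective] at this
  rwa [mul_comm]

theorem sq_dvd_discr (h : IsBiquadratic (a : ℚ) b α β) (ha : Squarefree a) :
    a.natAbs ^ 2 ∣ (NumberField.discr K).natAbs := by
  obtain ⟨γ, rfl, hγ⟩ := h.exists_ringOfIntegers_sq_eq
  have γ_ne_zero : γ ≠ 0 := by
    rintro rfl
    simp [ha.ne_zero, eq_comm] at hγ
  have absNorm_eq := absNorm_span_sq_eq_of_sq_eq hγ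
  rw [h.finrank_eq_four, pow_mul a.natAbs 2 2] at absNorm_eq
  rw [← Nat.pow_left_injective two_ne_zero absNorm_eq]
  exact absNorm_span_dvd_discr γ_ne_zero (h.isInteger_trace_div_left ha)

theorem card_isSquare_mul_le_four (h : IsBiquadratic (a : ℚ) b α β) {T : Finset ℕ}
    (hT : ∀ e ∈ T, Squarefree e) {d : ℕ} (hd : d ≠ 0) :
    {e ∈ T | IsSquare ((d : K) * (e : ℕ))}.card ≤ 4 := by
  have (e) (he : e ∈ {e ∈ T | IsSquare ((d : K) * (e : ℕ))}) :
      ∃ c ∈ ({1, (a : ℚ), (b : ℚ), (a : ℚ) * b} : Finset ℚ), ∃ r, (d : ℚ) * e = c * r ^ 2 := by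
    obtain ⟨z, hz⟩ := (Finset.mem_filter.1 he).2
    exact h.exists_eq_mul_sq_of_sq_eq (d := (d : ℚ) * e) (z := z) (by simp [sq, hz])
  choose! c hc r hr using this
  refine (Finset.card_le_card_of_injOn c hc fun e he e' he' hcc ↦ ?_).trans Finset.card_le_four
  refine eq_of_isSquare_mul (hT e (Finset.mem_filter.1 he).1) (hT e' (Finset.mem_filter.1 he').1) ?_
  rw [← Rat.isSquare_natCast_iff]
  refine ⟨c e * r e * r e' / d, ?_⟩
  have hd' : (d : ℚ) ≠ 0 := Nat.cast_ne_zero.2 hd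
  have h1 := hr e he
  have h2 := hr e' he'
  rw [← hcc] at h2
  field_simp
  push_cast
  linear_combination d * e' * h1 + c e * r e ^ 2 * h2

theorem card_divisors_le (h : IsBiquadratic (a : ℚ) b α β) (ha : Squarefree a) :
    a.natAbs.divisors.card ≤ 64 * Nat.card {c : ClassGroup (𝓞 K) // c ^ 2 = 1} := by
  obtain ⟨γ, -, hγ⟩ := h.exists_ringOfIntegers_sq_eq
  have squarefree (d) (hd : d ∈ a.natAbs.divisors) : Squarefree d :=
    (Int.squarefree_natAbs.2 ha).squarefree_of_dvd (Nat.dvd_of_mem_divisors hd)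
  have ideal_sq (d) (hd : d ∈ a.natAbs.divisors) :
      Ideal.span {(d : 𝓞 K), γ} ^ 2 = Ideal.span {(d : 𝓞 K)} := by
    obtain ⟨e, rfl⟩ := Int.natCast_dvd.2 (Nat.dvd_of_mem_divisors hd)
    have := (squarefree_mul_iff.1 ha).1.isCoprime.map (Int.castRingHom (𝓞 K))
    exact span_pair_sq (e := (e : 𝓞 K)) (by simpa using this) (by simpa using hγ)
  calc a.natAbs.divisors.card
      ≤ 4 * Nat.card (ModSquares (𝓞 K)ˣ) * Nat.card {c : ClassGroup (𝓞 K) // c ^ 2 = 1} :=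
        card_le_mul_card_classGroup (fun d hd ↦ by simpa using (squarefree d hd).ne_zero) ideal_sq
          fun d hd ↦ (Finset.card_le_card (Finset.monotone_filter_right _ fun e _ he ↦ by
            simpa using he.map (algebraMap (𝓞 K) K))).trans
            (h.card_isSquare_mul_le_four squarefree (squarefree d hd).ne_zero)
    _ ≤ 4 * 2 ^ 4 * Nat.card {c : ClassGroup (𝓞 K) // c ^ 2 = 1} := by
        gcongr
        exact (card_modSquares_units_le K).trans_eq (by rw [h.finrank_eq_four])

end IsBiquadratic

/- Upper bound: fields with bounded two-torsion in the class group -/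

theorem biquad_eq_adjoin_pair {a b : ℤ} {α β : ℂ} (hα : α ^ 2 = a) (hβ : β ^ 2 = b) :
    biquad a b = ℚ⟮α, β⟯ := by
  have hα' : α ∈ ℚ⟮α, β⟯ := subset_adjoin ℚ _ (by simp)
  have hβ' : β ∈ ℚ⟮α, β⟯ := subset_adjoin ℚ _ (by simp)
  refine le_antisymm (adjoin_le_iff.2 ?_) (adjoin.mono _ _ _ ?_)
  · rintro z (hz | hz)
    · obtain rfl | rfl := sq_eq_sq_iff_eq_or_eq_neg.1 (hz.trans hα.symm)
      exacts [hα', neg_mem hα']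
    · obtain rfl | rfl := sq_eq_sq_iff_eq_or_eq_neg.1 (hz.trans hβ.symm)
      exacts [hβ', neg_mem hβ']
  · rintro z (rfl | rfl)
    exacts [.inl hα, .inr hβ]

theorem exists_sqrts (a b : ℤ) : ∃ α β : ℂ, α ^ 2 = a ∧ β ^ 2 = b := by
  obtain ⟨α, hα⟩ := IsAlgClosed.exists_pow_nat_eq (a : ℂ) two_pos
  obtain ⟨β, hβ⟩ := IsAlgClosed.exists_pow_nat_eq (b : ℂ) two_pos
  exact ⟨α, β, hα, hβ⟩

theorem exists_isBiquadratic_biquad {a b : ℤ} (h : Module.finrank ℚ (biquad a b) = 4) :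
    ∃ α β : biquad a b, IsBiquadratic (a : ℚ) b α β := by
  obtain ⟨α, β, hα, hβ⟩ := exists_sqrts a b
  rw [biquad_eq_adjoin_pair hα hβ] at h ⊢
  exact ⟨_, _, .of_finrank_adjoin_eq_four (by simpa using hα) (by simpa using hβ) h⟩

theorem exists_isBiquadratic_of_mem_biquadFamily {K : IntermediateField ℚ ℂ}
    (hK : K ∈ biquadFamily) : ∃ a b : ℤ, Squarefree a ∧ Squarefree b ∧ K = biquad a b ∧
      ∃ α β : K, IsBiquadratic (a : ℚ) b α β := by
  obtain ⟨a, b, -, -, ha, hb, h, rfl⟩ := hK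
  exact ⟨a, b, ha, hb, rfl, exists_isBiquadratic_biquad h⟩

theorem numberField_of_mem_biquadFamily {K : IntermediateField ℚ ℂ} (hK : K ∈ biquadFamily) :
    NumberField K := by
  obtain ⟨-, -, -, -, -, -, h, -⟩ := hK
  have : FiniteDimensional ℚ K := .of_finrank_pos (by simp [h])
  exact ⟨⟩

theorem absDisc_eq_natAbs_discr (K : IntermediateField ℚ ℂ) [NumberField K] :
    absDisc K = (NumberField.discr K).natAbs :=
  dif_pos (inferInstance : FiniteDimensional ℚ K)

theorem finite_setOf_absDisc_le (X : ℝ) :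
    {K : IntermediateField ℚ ℂ | K ∈ biquadFamily ∧ (absDisc K : ℝ) ≤ X}.Finite := by
  refine ((NumberField.finite_of_discr_bdd ℂ ⌊X⌋₊).image Subtype.val).subset ?_
  rintro K ⟨hK, hX⟩
  have := numberField_of_mem_biquadFamily hK
  refine ⟨⟨K, inferInstance⟩, ?_, rfl⟩
  rw [absDisc_eq_natAbs_discr] at hX
  rw [Set.mem_ofPred_eq, Int.abs_eq_natAbs]
  exact_mod_cast Nat.le_floor hX

theorem card_intDivisors (z : ℤ) : z.divisors.card = 2 * z.natAbs.divisors.card := by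
  rw [Int.divisors, Finset.card_disjUnion, Finset.card_map, Finset.card_map, two_mul]

theorem card_divisors_lcm_le (m n : ℕ) :
    (m.lcm n).divisors.card ≤ m.divisors.card * n.divisors.card := by
  obtain rfl | hn := eq_or_ne n 0
  · simp
  rw [Nat.lcm, Nat.mul_div_assoc _ (Nat.gcd_dvd_right m n), Nat.divisors_mul]
  refine Finset.card_mul_le.trans (Nat.mul_le_mul_left _ (Finset.card_le_card ?_))
  exact Nat.divisors_subset_of_dvd hn (Nat.div_dvd_of_dvd (Nat.gcd_dvd_right m n))

theorem IsBiquadratic.lcm_sq_dvd_discr {K : Type*} [Field K] [NumberField K] {a b : ℤ} {α β : K}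
    (h : IsBiquadratic (a : ℚ) b α β) (ha : Squarefree a) (hb : Squarefree b) :
    a.natAbs.lcm b.natAbs ^ 2 ∣ (NumberField.discr K).natAbs := by
  rw [← Nat.pow_lcm_pow]
  exact Nat.lcm_dvd (h.sq_dvd_discr ha) (h.symm.sq_dvd_discr hb)

/-- The pairs of integers dividing a common positive integer `n ≤ N` with at most `k` divisors. -/
def commonDivisorPairs (k N : ℕ) : Finset (ℤ × ℤ) :=
  {n ∈ Finset.Ioc 0 N | n.divisors.card ≤ k}.biUnion fun n ↦
    (n : ℤ).divisors ×ˢ (n : ℤ).divisors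

theorem card_commonDivisorPairs_le (k N : ℕ) :
    (commonDivisorPairs k N).card ≤ N * (4 * k ^ 2) :=
  calc (commonDivisorPairs k N).card
      ≤ {n ∈ Finset.Ioc 0 N | n.divisors.card ≤ k}.card * (4 * k ^ 2) := by
        refine Finset.card_biUnion_le_card_mul _ _ _ fun n hn ↦ ?_
        rw [Finset.card_product, card_intDivisors, Int.natAbs_natCast, ← sq, mul_pow]
        exact Nat.mul_le_mul_left _ (Nat.pow_le_pow_left (Finset.mem_filter.1 hn).2 2)
    _ ≤ N * (4 * k ^ 2) :=
        Nat.mul_le_mul_right _ ((Finset.card_filter_le _ _).trans_eq (Nat.card_Ioc 0 N))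

theorem mem_commonDivisorPairs_of_lcm_le {k N : ℕ} {a b : ℤ} (ha : a ≠ 0) (hb : b ≠ 0)
    (hN : a.natAbs.lcm b.natAbs ≤ N) (hk : a.natAbs.divisors.card * b.natAbs.divisors.card ≤ k) :
    (a, b) ∈ commonDivisorPairs k N := by
  have lcm_ne_zero : a.natAbs.lcm b.natAbs ≠ 0 :=
    Nat.lcm_ne_zero (Int.natAbs_ne_zero.2 ha) (Int.natAbs_ne_zero.2 hb)
  simp only [commonDivisorPairs, Finset.mem_biUnion, Finset.mem_filter, Finset.mem_Ioc,
    Finset.mem_product, Int.mem_divisors, Int.dvd_natCast]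
  refine ⟨_, ⟨⟨Nat.pos_of_ne_zero lcm_ne_zero, hN⟩, (card_divisors_lcm_le _ _).trans hk⟩, ?_⟩
  exact ⟨⟨Nat.dvd_lcm_left _ _, by exact_mod_cast lcm_ne_zero⟩,
    Nat.dvd_lcm_right _ _, by exact_mod_cast lcm_ne_zero⟩

theorem exists_mem_commonDivisorPairs {K : IntermediateField ℚ ℂ} {k : ℕ} {X : ℝ}
    (hK : K ∈ biquadFamily) (hk : Nat.card {c : ClassGroup (𝓞 K) // c ^ 2 = 1} ≤ k)
    (hX : (absDisc K : ℝ) ≤ X) :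
    ∃ q ∈ commonDivisorPairs ((64 * k) ^ 2) ⌊√X⌋₊, biquad q.1 q.2 = K := by
  have := numberField_of_mem_biquadFamily hK
  obtain ⟨a, b, ha, hb, hab, α, β, h⟩ := exists_isBiquadratic_of_mem_biquadFamily hK
  have hlcm : a.natAbs.lcm b.natAbs ≤ ⌊√X⌋₊ := by
    refine Nat.le_floor (Real.le_sqrt_of_sq_le (le_trans ?_ hX))
    rw [absDisc_eq_natAbs_discr]
    exact_mod_cast Nat.le_of_dvd (Int.natAbs_pos.2 (NumberField.discr_ne_zero K))
      (h.lcm_sq_dvd_discr ha hb)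
  have hdiv : a.natAbs.divisors.card * b.natAbs.divisors.card ≤ (64 * k) ^ 2 :=
    calc a.natAbs.divisors.card * b.natAbs.divisors.card
        ≤ (64 * k) * (64 * k) := by
          gcongr
          · exact (h.card_divisors_le ha).trans (Nat.mul_le_mul_left _ hk)
          · exact (h.symm.card_divisors_le hb).trans (Nat.mul_le_mul_left _ hk)
      _ = (64 * k) ^ 2 := (sq _).symm
  exact ⟨(a, b), mem_commonDivisorPairs_of_lcm_le ha.ne_zero hb.ne_zero hlcm hdiv, hab.symm⟩

/-- The number of fields in `biquadFamily` of absolute discriminant at most `X` whose class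
group has at most `k` elements of order dividing two. -/
def countTwoTorsionLE (k : ℕ) (X : ℝ) : ℕ :=
  Nat.card {K : IntermediateField ℚ ℂ // K ∈ biquadFamily ∧
    Nat.card {c : ClassGroup (𝓞 K) // c ^ 2 = 1} ≤ k ∧ (absDisc K : ℝ) ≤ X}

theorem countTwoTorsionLE_le (k : ℕ) (X : ℝ) :
    (countTwoTorsionLE k X : ℝ) ≤ 4 * (64 * k) ^ 4 * √X := by
  have card_le : countTwoTorsionLE k X ≤ ⌊√X⌋₊ * (4 * ((64 * k) ^ 2) ^ 2) :=
    calc countTwoTorsionLE k X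
        ≤ ((commonDivisorPairs ((64 * k) ^ 2) ⌊√X⌋₊).image fun q ↦ biquad q.1 q.2).card := by
          rw [← Set.ncard_coe_finset]
          refine Set.ncard_le_ncard (fun K hK ↦ Finset.mem_image.2 ?_) (Finset.finite_toSet _)
          exact exists_mem_commonDivisorPairs hK.1 hK.2.1 hK.2.2
      _ ≤ (commonDivisorPairs ((64 * k) ^ 2) ⌊√X⌋₊).card := Finset.card_image_le
      _ ≤ ⌊√X⌋₊ * (4 * ((64 * k) ^ 2) ^ 2) := card_commonDivisorPairs_le _ _
  calc (countTwoTorsionLE k X : ℝ) ≤ ⌊√X⌋₊ * (4 * ((64 * k) ^ 2) ^ 2) := by exact_mod_cast card_le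
    _ ≤ √X * (4 * ((64 * k) ^ 2) ^ 2) := by
        gcongr
        exact Nat.floor_le (Real.sqrt_nonneg X)
    _ = 4 * (64 * k) ^ 4 * √X := by ring

/- Lower bound: the size of the whole family -/

theorem not_isSquare_cast_of_squarefree {n : ℕ} (hn : Squarefree n) (h1 : n ≠ 1) :
    ¬ IsSquare (n : ℚ) := fun h ↦
  h1 (eq_of_isSquare_mul hn squarefree_one (by rwa [mul_one, ← Rat.isSquare_natCast_iff]))

theorem finrank_biquad_eq_four {a b : ℕ} (hab : Squarefree (a * b)) (ha : a ≠ 1) (hb : b ≠ 1) :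
    Module.finrank ℚ (biquad a b) = 4 := by
  obtain ⟨α, β, hα, hβ⟩ := exists_sqrts a b
  obtain ⟨-, ha', hb'⟩ := Nat.squarefree_mul_iff.1 hab
  rw [biquad_eq_adjoin_pair hα hβ]
  refine finrank_adjoin_pair_sqrt_eq_four (a := (a : ℚ)) (b := b) (by simpa using hα)
    (by simpa using hβ) (not_isSquare_cast_of_squarefree ha' ha)
    (not_isSquare_cast_of_squarefree hb' hb) ?_
  rw [← Nat.cast_mul]
  exact not_isSquare_cast_of_squarefree hab fun h ↦ ha (Nat.eq_one_of_mul_eq_one_right h)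

theorem mem_of_sq_mem_biquad {a b d : ℕ} (hab : Squarefree (a * b)) (ha : a ≠ 1) (hb : b ≠ 1)
    (hd : Squarefree d) {z : ℂ} (hz : z ^ 2 = d) (hmem : z ∈ biquad a b) :
    d ∈ ({1, a, b, a * b} : Finset ℕ) := by
  obtain ⟨-, ha', hb'⟩ := Nat.squarefree_mul_iff.1 hab
  obtain ⟨α, β, h⟩ := exists_isBiquadratic_biquad (finrank_biquad_eq_four hab ha hb)
  obtain ⟨c, hc, r, hr⟩ := h.exists_eq_mul_sq_of_sq_eq (d := (d : ℚ))
    (z := ⟨z, hmem⟩) (Subtype.ext (by simpa using hz))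
  have eq_of_cast {e : ℕ} (he : Squarefree e) (hce : c = e) : d = e := by
    refine eq_of_isSquare_mul hd he (Rat.isSquare_natCast_iff.1 ⟨e * r, ?_⟩)
    rw [Nat.cast_mul, hr, hce]
    ring
  simp only [Finset.mem_insert, Finset.mem_singleton] at hc ⊢
  exact hc.imp (fun h ↦ eq_of_cast squarefree_one (by simpa using h)) <|
    Or.imp (fun h ↦ eq_of_cast ha' (by simpa using h)) <|
    Or.imp (fun h ↦ eq_of_cast hb' (by simpa using h))
    (fun h ↦ eq_of_cast hab (by simpa using h))

theorem biquad_injOn (A : ℕ) : Set.InjOn (fun q : ℕ × ℕ ↦ biquad q.1 q.2)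
    {q | q.1 ∈ Set.Ioc 1 A ∧ A < q.2 ∧ Squarefree (q.1 * q.2)} := by
  rintro ⟨p, b⟩ ⟨⟨hp, hpA⟩, hb, hpb⟩ ⟨p', b'⟩ ⟨⟨hp', hpA'⟩, hb', hpb'⟩ heq
  dsimp only at *
  obtain ⟨α, β, hα, hβ⟩ := exists_sqrts p' b'
  have hα_mem : α ∈ biquad p b := heq ▸ subset_adjoin ℚ _ (.inl hα)
  have hβ_mem : β ∈ biquad p b := heq ▸ subset_adjoin ℚ _ (.inr hβ)
  obtain ⟨-, hp'', hb''⟩ := Nat.squarefree_mul_iff.1 hpb'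
  have p'_mem := mem_of_sq_mem_biquad hpb (by lia) (by lia) hp'' (by simpa using hα) hα_mem
  have b'_mem := mem_of_sq_mem_biquad hpb (by lia) (by lia) hb'' (by simpa using hβ) hβ_mem
  simp only [Finset.mem_insert, Finset.mem_singleton] at p'_mem b'_mem
  have hbpb : b ≤ p * b := Nat.le_mul_of_pos_left b (by lia)
  obtain rfl : p' = p := by lia
  obtain rfl | rfl : b' = b ∨ b' = p' * b := by lia
  · rfl
  · exact absurd (hpb'.squarefree_of_dvd ⟨b, (mul_assoc ..).symm⟩) fun h ↦
      hp.ne' (Nat.isUnit_iff.1 (h _ dvd_rfl))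

theorem biquad_mem_biquadFamily {a b : ℕ} (hab : Squarefree (a * b)) (ha : a ≠ 1) (hb : b ≠ 1)
    (ha_odd : Odd a) (hb_odd : Odd b) : biquad a b ∈ biquadFamily := by
  obtain ⟨-, ha', hb'⟩ := Nat.squarefree_mul_iff.1 hab
  exact ⟨a, b, mod_cast ha_odd, mod_cast hb_odd, Int.squarefree_natCast.2 ha',
    Int.squarefree_natCast.2 hb', finrank_biquad_eq_four hab ha hb, rfl⟩

theorem absDisc_biquad_le {a b : ℕ} (hab : Squarefree (a * b)) (ha : a ≠ 1) (hb : b ≠ 1) :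
    absDisc (biquad a b) ≤ (16 * (a * b)) ^ 2 := by
  obtain ⟨-, ha', hb'⟩ := Nat.squarefree_mul_iff.1 hab
  obtain ⟨α, β, h⟩ := exists_isBiquadratic_biquad (finrank_biquad_eq_four hab ha hb)
  have := h.finiteDimensional
  have : NumberField (biquad a b) := ⟨⟩
  rw [absDisc_eq_natAbs_discr]
  refine (h.natAbs_discr_le (mod_cast ha'.ne_zero) (mod_cast hb'.ne_zero)).trans_eq ?_
  simp only [Int.natAbs_natCast]
  ring

theorem sum_one_div_odd_sq_le (n : ℕ) :
    ∑ k ∈ Finset.range n, (1 : ℝ) / (2 * k + 3) ^ 2 ≤ 1 / 4 - 1 / (4 * ((n : ℝ) + 1)) := by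
  induction n with
  | zero => simp
  | succ n ih =>
    have step : (1 : ℝ) / (2 * n + 3) ^ 2 ≤
        1 / (4 * ((n : ℝ) + 1)) - 1 / (4 * ((n : ℝ) + 1 + 1)) := by
      rw [div_sub_div _ _ (by positivity) (by positivity), div_le_div_iff₀ (by positivity)
        (by positivity)]
      nlinarith [Nat.cast_nonneg (α := ℝ) n]
    rw [Finset.sum_range_succ, Nat.cast_add_one]
    linarith

theorem exists_odd_sq_dvd_of_not_squarefree {b : ℕ} (hb : Odd b) (h : ¬ Squarefree b) :
    ∃ k, (2 * k + 3) ^ 2 ∣ b := by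
  rw [Nat.squarefree_iff_prime_squarefree] at h
  push Not at h
  obtain ⟨q, hq, hqb⟩ := h
  obtain ⟨k, rfl⟩ := hb.of_dvd_nat (dvd_of_mul_left_dvd hqb)
  obtain _ | k := k
  · exact absurd hq (by norm_num)
  · exact ⟨k, by rwa [sq]⟩

theorem card_odd_not_squarefree_le (M : ℕ) :
    ({b ∈ Finset.Ioc 0 M | Odd b ∧ ¬ Squarefree b}.card : ℝ) ≤ M / 4 := by
  have subset : {b ∈ Finset.Ioc 0 M | Odd b ∧ ¬ Squarefree b} ⊆
      (Finset.range M).biUnion fun k ↦ {b ∈ Finset.Ioc 0 M | (2 * k + 3) ^ 2 ∣ b} := by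
    intro b hb
    simp only [Finset.mem_filter, Finset.mem_biUnion, Finset.mem_range] at hb ⊢
    obtain ⟨k, hk⟩ := exists_odd_sq_dvd_of_not_squarefree hb.2.1 hb.2.2
    have hbM := Finset.mem_Ioc.1 hb.1
    have := Nat.le_of_dvd hbM.1 hk
    exact ⟨k, by nlinarith, hb.1, hk⟩
  calc ({b ∈ Finset.Ioc 0 M | Odd b ∧ ¬ Squarefree b}.card : ℝ)
      ≤ ∑ k ∈ Finset.range M, ((M / (2 * k + 3) ^ 2 : ℕ) : ℝ) := by
        simp only [← Nat.Ioc_filter_dvd_card_eq_div]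
        exact_mod_cast (Finset.card_le_card subset).trans Finset.card_biUnion_le
    _ ≤ ∑ k ∈ Finset.range M, M * ((1 : ℝ) / (2 * k + 3) ^ 2) := by
        gcongr with k
        exact Nat.cast_div_le.trans_eq (by push_cast; ring)
    _ = M * ∑ k ∈ Finset.range M, (1 : ℝ) / (2 * k + 3) ^ 2 := (Finset.mul_sum ..).symm
    _ ≤ M * (1 / 4) := by
        gcongr
        exact (sum_one_div_odd_sq_le M).trans (sub_le_self _ (by positivity))
    _ = M / 4 := by ring

/-- The odd squarefree numbers `b ∈ (A, M]` coprime to the squarefree number `p`. -/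
def oddSquarefreeCoprime (p A M : ℕ) : Finset ℕ :=
  {b ∈ Finset.Ioc A M | Odd b ∧ Squarefree (p * b)}

theorem le_card_oddSquarefreeCoprime {p : ℕ} (hp : p.Prime) (A M : ℕ) :
    (1 / 4 - 1 / p : ℝ) * M - A ≤ (oddSquarefreeCoprime p A M).card := by
  have subset : Finset.Ioc 0 M ⊆ oddSquarefreeCoprime p A M ∪ (Finset.Ioc 0 A ∪
      ({b ∈ Finset.Ioc 0 M | 2 ∣ b} ∪ ({b ∈ Finset.Ioc 0 M | p ∣ b} ∪
        {b ∈ Finset.Ioc 0 M | Odd b ∧ ¬ Squarefree b}))) := by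
    intro b hb
    simp only [oddSquarefreeCoprime, Finset.mem_union, Finset.mem_filter, hb, true_and,
      Nat.squarefree_mul_iff, hp.coprime_iff_not_dvd, hp.squarefree, ← even_iff_two_dvd,
      ← Nat.not_odd_iff_even]
    simp only [Finset.mem_Ioc] at hb ⊢
    by_cases b ≤ A <;> grind
  have card_le := (Finset.card_le_card subset).trans <| (Finset.card_union_le _ _).trans <|
    Nat.add_le_add_left ((Finset.card_union_le _ _).trans <| Nat.add_le_add_left
      ((Finset.card_union_le _ _).trans <| Nat.add_le_add_left (Finset.card_union_le _ _) _) _) _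
  rw [Nat.Ioc_filter_dvd_card_eq_div, Nat.Ioc_filter_dvd_card_eq_div, Nat.card_Ioc, Nat.card_Ioc]
    at card_le
  have card_le' : (M : ℝ) ≤ (oddSquarefreeCoprime p A M).card + (A + ((M / 2 : ℕ) +
      ((M / p : ℕ) + {b ∈ Finset.Ioc 0 M | Odd b ∧ ¬ Squarefree b}.card))) := by
    exact_mod_cast card_le
  have h2 : ((M / 2 : ℕ) : ℝ) ≤ M / 2 := Nat.cast_div_le
  have hp' : ((M / p : ℕ) : ℝ) ≤ M / p := Nat.cast_div_le
  have := card_odd_not_squarefree_le M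
  rw [sub_mul, one_div_mul_eq_div, one_div_mul_eq_div]
  linarith

theorem tendsto_sum_one_div_primes (k : ℕ) :
    Tendsto (fun n ↦ ∑ p ∈ Finset.Ico k n with p.Prime, (1 : ℝ) / p) atTop atTop := by
  have h := (not_summable_iff_tendsto_nat_atTop_of_nonneg fun n ↦
    Set.indicator_nonneg (fun _ _ ↦ by positivity) n).1 not_summable_one_div_on_primes
  refine (tendsto_atTop_add_const_right atTop (-∑ p ∈ Finset.range k,
    {p : ℕ | p.Prime}.indicator (fun n : ℕ ↦ (1 : ℝ) / n) p) h).congr' ?_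
  filter_upwards [eventually_ge_atTop k] with n hn
  rw [← sub_eq_add_neg, ← Finset.sum_Ico_eq_sub _ hn, Finset.sum_filter]
  exact Finset.sum_congr rfl fun p _ ↦ by simp [Set.indicator_apply]

theorem absDisc_biquad_le_of_mem {p A b : ℕ} {X : ℝ} (hp : p.Prime)
    (hb : b ∈ oddSquarefreeCoprime p A ⌊√X / (16 * p)⌋₊) (hb1 : b ≠ 1) :
    (absDisc (biquad p b) : ℝ) ≤ X := by
  obtain ⟨hb, -, hpb⟩ := Finset.mem_filter.1 hb
  obtain ⟨hAb, hbM⟩ := Finset.mem_Ioc.1 hb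
  have hp0 : (0 : ℝ) < p := mod_cast hp.pos
  have hb0 : (0 : ℝ) < b := mod_cast hAb.pos
  have hle : (16 * (p * b) : ℝ) ≤ √X := by
    have := (Nat.le_floor_iff (by positivity)).1 hbM
    rw [le_div_iff₀ (by positivity)] at this
    linarith
  calc (absDisc (biquad p b) : ℝ) ≤ (16 * (p * b)) ^ 2 := by
        exact_mod_cast absDisc_biquad_le hpb hp.ne_one hb1
    _ ≤ X := (Real.le_sqrt' (by positivity)).1 hle

theorem sum_card_oddSquarefreeCoprime_le_countS (A : ℕ) (X : ℝ) :
    ∑ p ∈ Finset.Ico 8 A with p.Prime, (oddSquarefreeCoprime p A ⌊√X / (16 * p)⌋₊).card ≤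
      countS X := by
  rw [← Finset.card_sigma, ← Set.ncard_coe_finset]
  have mem_imp {p b : ℕ} (h : (⟨p, b⟩ : (_ : ℕ) × ℕ) ∈ {p ∈ Finset.Ico 8 A | p.Prime}.sigma
      fun p ↦ oddSquarefreeCoprime p A ⌊√X / (16 * p)⌋₊) : 8 ≤ p ∧ p < A ∧ p.Prime ∧
        b ∈ oddSquarefreeCoprime p A ⌊√X / (16 * p)⌋₊ ∧ A < b ∧ Odd b ∧ Squarefree (p * b) := by
    simp only [Finset.mem_sigma, Finset.mem_filter, Finset.mem_Ico, oddSquarefreeCoprime,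
      Finset.mem_Ioc] at h ⊢
    tauto
  refine Set.ncard_le_ncard_of_injOn (fun q ↦ biquad q.1 q.2) ?_ ?_ (finite_setOf_absDisc_le X)
  · rintro ⟨p, b⟩ hq
    obtain ⟨hp8, hpA, hp, hb, hAb, hb_odd, hpb⟩ := mem_imp hq
    exact ⟨biquad_mem_biquadFamily hpb hp.ne_one (by lia) (hp.odd_of_ne_two (by lia)) hb_odd,
      absDisc_biquad_le_of_mem hp hb (by lia)⟩
  · rintro ⟨p, b⟩ hq ⟨p', b'⟩ hq' heq
    obtain ⟨hp8, hpA, -, -, hAb, -, hpb⟩ := mem_imp hq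
    obtain ⟨hp8', hpA', -, -, hAb', -, hpb'⟩ := mem_imp hq'
    have mem : (p, b) ∈ {q : ℕ × ℕ | q.1 ∈ Set.Ioc 1 A ∧ A < q.2 ∧ Squarefree (q.1 * q.2)} :=
      ⟨⟨by lia, hpA.le⟩, hAb, hpb⟩
    have mem' : (p', b') ∈ {q : ℕ × ℕ | q.1 ∈ Set.Ioc 1 A ∧ A < q.2 ∧ Squarefree (q.1 * q.2)} :=
      ⟨⟨by lia, hpA'.le⟩, hAb', hpb'⟩
    obtain ⟨rfl, rfl⟩ := Prod.mk.inj (biquad_injOn A mem mem' heq)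
    rfl

theorem sqrt_mul_sum_sub_le_countS (A : ℕ) (X : ℝ) :
    √X / 128 * ∑ p ∈ Finset.Ico 8 A with p.Prime, (1 : ℝ) / p -
      {p ∈ Finset.Ico 8 A | p.Prime}.card * (A + 1) ≤ countS X := by
  calc √X / 128 * ∑ p ∈ Finset.Ico 8 A with p.Prime, (1 : ℝ) / p -
        {p ∈ Finset.Ico 8 A | p.Prime}.card * (A + 1)
      = ∑ p ∈ Finset.Ico 8 A with p.Prime, (√X / 128 * (1 / p) - (A + 1 : ℝ)) := by
        rw [Finset.sum_sub_distrib, Finset.mul_sum, Finset.sum_const, nsmul_eq_mul]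
    _ ≤ ∑ p ∈ Finset.Ico 8 A with p.Prime,
          ((oddSquarefreeCoprime p A ⌊√X / (16 * p)⌋₊).card : ℝ) := by
        refine Finset.sum_le_sum fun p hp ↦ ?_
        rw [Finset.mem_filter, Finset.mem_Ico] at hp
        have hp8 : (1 : ℝ) / p ≤ 1 / 8 :=
          one_div_le_one_div_of_le (by norm_num) (mod_cast hp.1.1)
        have floor_gt := Nat.lt_floor_add_one (√X / (16 * p))
        have mul_le : (1 / 8 : ℝ) * ⌊√X / (16 * p)⌋₊ ≤ (1 / 4 - 1 / p) * ⌊√X / (16 * p)⌋₊ := by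
          gcongr
          linarith
        have eq : √X / 128 * (1 / p) = 1 / 8 * (√X / (16 * p)) := by ring
        linarith [le_card_oddSquarefreeCoprime hp.2 A ⌊√X / (16 * p)⌋₊]
    _ ≤ countS X := mod_cast sum_card_oddSquarefreeCoprime_le_countS A X

theorem sqrt_isLittleO_countS : Real.sqrt =o[atTop] fun X ↦ (countS X : ℝ) := by
  refine Asymptotics.isLittleO_iff_nat_mul_le.2 fun n ↦ ?_
  obtain ⟨A, hA⟩ :=
    ((tendsto_sum_one_div_primes 8).eventually_ge_atTop (128 * (n + 1 : ℝ))).exists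
  filter_upwards [Real.tendsto_sqrt_atTop.eventually_ge_atTop
    ({p ∈ Finset.Ico 8 A | p.Prime}.card * (A + 1) : ℝ)] with X hX
  rw [Real.norm_natCast, Real.norm_of_nonneg (Real.sqrt_nonneg X)]
  have := mul_le_mul_of_nonneg_left hA (show 0 ≤ √X / 128 by positivity)
  linarith [sqrt_mul_sum_sub_le_countS A X]

theorem natCard_sq_eq_one_le_two_of_hasEuclideanIdeal {K : IntermediateField ℚ ℂ}
    (hK : HasEuclideanIdeal K) : Nat.card {c : ClassGroup (𝓞 K) // c ^ 2 = 1} ≤ 2 := by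
  obtain ⟨hfin, C, hC⟩ := hK
  have : NumberField K := ⟨⟩
  have := hC.isCyclic_classGroup
  rw [Nat.subtype_card {c : ClassGroup (𝓞 K) | c ^ 2 = 1} (by simp)]
  exact IsCyclic.card_pow_eq_one_le two_pos

theorem countSE_le_countTwoTorsionLE (X : ℝ) : countSE X ≤ countTwoTorsionLE 2 X :=
  Nat.card_mono ((finite_setOf_absDisc_le X).subset fun _ hK ↦ ⟨hK.1, hK.2.2⟩) fun _ hK ↦
    ⟨hK.1, natCard_sq_eq_one_le_two_of_hasEuclideanIdeal hK.2.1, hK.2.2⟩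

theorem stmt19_general (k : ℕ) :
    Tendsto (fun X : ℝ ↦ (countTwoTorsionLE k X : ℝ) / countS X) atTop (nhds 0) := by
  have isBigO : (fun X ↦ (countTwoTorsionLE k X : ℝ)) =O[atTop] Real.sqrt :=
    .of_bound (4 * (64 * k) ^ 4) <| .of_forall fun X ↦ by
      simpa [abs_of_nonneg (Real.sqrt_nonneg X)] using countTwoTorsionLE_le k X
  exact (isBigO.trans_isLittleO sqrt_isLittleO_countS).tendsto_div_nhds_zero

theorem stmt19 :
    Tendsto (fun X : ℝ => (countSE X : ℝ) / (countS X : ℝ)) atTop (nhds 0) :=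
  squeeze_zero (fun X ↦ by positivity) (fun X ↦ by gcongr; exact countSE_le_countTwoTorsionLE X)
    (stmt19_general 2)
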